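/- arXiv:math/0607094 — 6 statements merged into one kernel-verified Lean document; each statement's English description precedes it below -/
import Mathlib

section
/- Let R be a commutative integral domain with identity, let n ≥ 1, and let A be an n×n matrix with entries in R such that every proper principal minor of A equals 1. If det A = 1, then A is conjugate by a permutation matrix to a unipotent upper triangular matrix; that is, there exists a permutation σ of {1,…,n} such that A(σ(i),σ(i)) = 1 for all i and A(σ(i),σ(j)) = 0 whenever j < i. -/
/-- A matrix with unit diagonal whose digraph is a minimal set without a source has `det ≠ 1`. -/
lemma det_ne_one_of_minimal {R : Type*} [CommRing R] [IsDomain R] {V : Type*} [Fintype V]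
    [DecidableEq V] [Nonempty V] (M : Matrix V V R) (hd : ∀ v, M v v = 1)
    (f : V → V) (hf : ∀ v, f v ≠ v ∧ M (f v) v ≠ 0)
    (hmin : ∀ T : Finset V, T.Nonempty →
      (∀ v ∈ T, ∃ u ∈ T, u ≠ v ∧ M u v ≠ 0) → T = Finset.univ) : M.det ≠ 1 := by
  have hbij : ∀ g : V → V, (∀ v, g v ≠ v ∧ M (g v) v ≠ 0) → Function.Bijective g := by
    intro g hg
    have h1 : Finset.univ.image g = Finset.univ := by
      apply hmin _ (Finset.univ_nonempty.image g)
      intro v _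
      exact ⟨g v, Finset.mem_image_of_mem _ (Finset.mem_univ _), hg v⟩
    have h2 : Function.Surjective g := by
      intro y
      have : y ∈ Finset.univ.image g := by rw [h1]; exact Finset.mem_univ y
      simpa using this
    exact Finite.injective_iff_bijective.1 (Finite.injective_iff_surjective.2 h2)
  have huniq : ∀ u v, u ≠ v → M u v ≠ 0 → u = f v := by
    intro u v huv hM
    by_contra hne
    have hg := hbij (Function.update f v u) (by
      intro w
      by_cases hw : w = v
      · subst hw; simpa using ⟨huv, hM⟩
      · simpa [Function.update_of_ne hw] using hf w)
    obtain ⟨w, hw⟩ := (hbij f hf).2 u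
    have hwv : w ≠ v := by rintro rfl; exact hne hw.symm
    exact hwv (hg.1 (by simp [Function.update_of_ne hwv, hw]))
  let φ : Equiv.Perm V := Equiv.ofBijective f (hbij f hf)
  have hφ : ∀ v, φ v = f v := fun v => rfl
  have hφ1 : (1 : Equiv.Perm V) ≠ φ := by
    intro h
    obtain ⟨v⟩ := ‹Nonempty V›
    exact (hf v).1 (by rw [← hφ, ← h]; rfl)
  have hterm : ∀ σ : Equiv.Perm V, σ ≠ 1 → σ ≠ φ → ∏ i, M (σ i) i = 0 := by
    intro σ h1 h2
    by_contra hp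
    have hp' : ∀ i, M (σ i) i ≠ 0 := fun i => Finset.prod_ne_zero_iff.1 hp i (Finset.mem_univ i)
    have hc : ∀ i, σ i ≠ i → σ i = f i := fun i hi => huniq _ _ hi (hp' i)
    apply h2
    have hT : (Finset.univ.filter fun v => σ v ≠ v) = Finset.univ := by
      apply hmin
      · by_contra hne
        apply h1
        ext v
        by_contra hv
        exact hne ⟨v, by simpa using hv⟩
      · intro v hv
        have hv' : σ v ≠ v := by simpa using hv
        refine ⟨σ v, ?_, hv', hp' v⟩
        simpa using hv'
    ext v
    have : v ∈ Finset.univ.filter fun v => σ v ≠ v := by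
      rw [hT]; exact Finset.mem_univ v
    rw [hφ]
    exact hc v (by simpa using this)
  have hdet : M.det = 1 + ((Equiv.Perm.sign φ : ℤ) : R) * ∏ i, M (f i) i := by
    rw [Matrix.det_apply', ← Finset.sum_subset (Finset.subset_univ {1, φ}),
      Finset.sum_pair hφ1]
    · simp [hd, hφ]
    · intro σ _ hσ
      simp only [Finset.mem_insert, Finset.mem_singleton, not_or] at hσ
      rw [hterm σ hσ.1 hσ.2, mul_zero]
  rw [hdet]
  intro h
  have h0 : ((Equiv.Perm.sign φ : ℤ) : R) * ∏ i, M (f i) i = 0 := by simpa using h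
  rcases mul_eq_zero.1 h0 with h | h
  · rcases Int.units_eq_one_or (Equiv.Perm.sign φ) with hs | hs <;> simp [hs] at h
  · exact Finset.prod_ne_zero_iff.2 (fun i _ => (hf i).2) h

/-- Let `R` be a commutative integral domain, `n ≥ 1`, and `A` an `n × n`
matrix over `R` all of whose proper principal minors equal `1`. If `det A = 1`, then `A` is
conjugate by a permutation matrix to a unipotent upper triangular matrix. -/
theorem matrix_proper_principal_minors_one_det_one_perm_unipotent_upper_triangular
    {R : Type*} [CommRing R] [IsDomain R] {n : ℕ} (hn : 1 ≤ n)
    (A : Matrix (Fin n) (Fin n) R)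
    (hminors : ∀ I : Finset (Fin n), I ≠ Finset.univ →
      (A.submatrix (fun i : I => (i : Fin n)) (fun i : I => (i : Fin n))).det = 1)
    (hdet : A.det = 1) :
    ∃ σ : Equiv.Perm (Fin n),
      (∀ i : Fin n, A (σ i) (σ i) = 1) ∧
      (∀ i j : Fin n, j < i → A (σ i) (σ j) = 0) := by
  have hall : ∀ I : Finset (Fin n),
      (A.submatrix (fun i : I => (i : Fin n)) (fun i : I => (i : Fin n))).det = 1 := by
    intro I
    by_cases hI : I = Finset.univ
    · subst hI
      rw [← hdet]
      convert Matrix.det_submatrix_equiv_self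
        (Equiv.subtypeUnivEquiv (fun x => Finset.mem_univ x)) A <;> rfl
    · exact hminors I hI
  have hdiag : ∀ i, A i i = 1 := by
    intro i
    have h := hall {i}
    rw [Matrix.det_unique] at h
    exact h
  have key : ∀ S : Finset (Fin n), S.Nonempty → ∃ v ∈ S, ∀ u ∈ S, ¬ (u ≠ v ∧ A u v ≠ 0) := by
    intro S
    induction S using Finset.strongInduction with
    | H S ih =>
      intro hS
      by_contra! hcon
      choose f hfS hf using hcon
      have : Nonempty S := hS.to_subtype
      refine det_ne_one_of_minimal
        (A.submatrix (fun i : S => (i : Fin n)) (fun i : S => (i : Fin n)))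
        (fun v => hdiag _) (fun v => ⟨f v v.2, hfS v v.2⟩)
        (fun v => ⟨fun h => (hf v v.2).1 (congrArg Subtype.val h), (hf v v.2).2⟩) ?_ (hall S)
      intro T hT hTc
      by_contra hne
      have hss : T.map (Function.Embedding.subtype _) ⊂ S := by
        refine Finset.ssubset_iff_subset_ne.2 ⟨?_, ?_⟩
        · intro x hx
          simp only [Finset.mem_map] at hx
          obtain ⟨y, _, rfl⟩ := hx
          exact y.2
        · intro h
          apply hne
          ext x
          have hx : (x : Fin n) ∈ T.map (Function.Embedding.subtype (· ∈ S)) := by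
            rw [h]; exact x.2
          simpa using hx
      obtain ⟨v, hv, hvu⟩ := ih _ hss (hT.map)
      obtain ⟨w, hw, rfl⟩ := Finset.mem_map.1 hv
      obtain ⟨u, hu, huw, hM⟩ := hTc w hw
      exact hvu u (Finset.mem_map_of_mem _ hu) ⟨fun h => huw (Subtype.ext h), hM⟩
  have hwf : WellFounded (fun u v : Fin n => u ≠ v ∧ A u v ≠ 0) := by
    classical
    rw [WellFounded.wellFounded_iff_has_min]
    intro s hs
    obtain ⟨v, hv, h⟩ := key s.toFinset (by simpa using hs)
    exact ⟨v, by simpa using hv, fun u hu => h u (by simpa using hu)⟩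
  have : IsWellFounded (Fin n) (fun u v : Fin n => u ≠ v ∧ A u v ≠ 0) := ⟨hwf⟩
  let g : Fin n → Ordinal := fun v => IsWellFounded.rank (fun u v : Fin n => u ≠ v ∧ A u v ≠ 0) v
  refine ⟨Tuple.sort g, fun i => hdiag _, ?_⟩
  intro i j hji
  by_contra hA
  have h1 : g (Tuple.sort g i) < g (Tuple.sort g j) :=
    IsWellFounded.rank_lt_of_rel (r := fun u v : Fin n => u ≠ v ∧ A u v ≠ 0)
       ⟨fun h => hji.ne' ((Tuple.sort g).injective h), hA⟩
  exact absurd (Tuple.monotone_sort g hji.le) (not_le.2 h1)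
end

section
/- Let R be a commutative integral domain with identity, let n ≥ 2, and let A be an n×n matrix with entries in R such that every proper principal minor of A equals 1. If det A ≠ 1, then A is conjugate by a permutation matrix to a matrix of the following cyclic form: there exists a permutation σ of {1,…,n} such that the matrix B with entries B(i,j) = A(σ(i),σ(j)) satisfies B(i,i) = 1 for all i, B(i,i+1) = b_i ≠ 0 for 1 ≤ i ≤ n−1, B(n,1) = b_n ≠ 0, and B(i,j) = 0 for all other pairs (i,j). -/
open Fin.CommRing in
lemma cyc_det_ne_one {R : Type*} [CommRing R] [IsDomain R] {k : ℕ} [NeZero k] (hk : 2 ≤ k)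
    (B : Matrix (Fin k) (Fin k) R) (h1 : ∀ i, B i i = 1) (h2 : ∀ i, B i (i + 1) ≠ 0)
    (h3 : ∀ i j, B i j ≠ 0 → i ≠ j → j = i + 1) : B.det ≠ 1 := by
  have h10 : (1 : Fin k) ≠ 0 := by
    intro h
    have := congrArg Fin.val h
    rw [Fin.val_one', Fin.val_zero, Nat.mod_eq_of_lt (by omega)] at this
    omega
  have hne : (1 : Equiv.Perm (Fin k)) ≠ Equiv.addRight 1 := by
    intro h
    have := congrArg (fun e => e 0) h
    simp at this
    omega
  rw [← Matrix.det_transpose, Matrix.det_apply', 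
    Finset.sum_eq_add (1 : Equiv.Perm (Fin k)) (Equiv.addRight 1) hne]
  · simp only [Matrix.transpose_apply, Equiv.Perm.coe_one, id, h1, Equiv.coe_addRight]
    intro h
    have hp : ∏ i : Fin k, B i (i + 1) ≠ 0 := Finset.prod_ne_zero_iff.2 fun i _ => h2 i
    rcases Int.units_eq_one_or (Equiv.Perm.sign (Equiv.addRight (1 : Fin k))) with hs | hs
    · rw [hs] at h; simp at h; exact hp h
    · rw [hs] at h; simp at h; exact hp h
  · rintro τ - ⟨ht1, ht2⟩
    by_contra hc
    have hnz : ∀ i, B i (τ i) ≠ 0 := by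
      intro i hi
      apply hc
      rw [Finset.prod_eq_zero (Finset.mem_univ i) (by simpa using hi), mul_zero]
    obtain ⟨i0, hi0⟩ : ∃ i, τ i ≠ i := by
      by_contra hcon
      push Not at hcon
      exact ht1 (Equiv.ext hcon)
    have hind : ∀ m : ℕ, τ (i0 + m) ≠ i0 + m := by
      intro m
      induction m with
      | zero => simpa using hi0
      | succ m ih =>
        have h := h3 _ _ (hnz (i0 + m)) ih.symm
        intro hh
        have e : i0 + ((m + 1 : ℕ) : Fin k) = i0 + m + 1 := by push_cast; ring
        rw [e] at hh
        have := τ.injective (hh.trans h.symm)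
        exact h10 (by simpa using this)
    apply ht2
    ext1 j
    have hj := hind (j - i0).val
    rw [Fin.cast_val_eq_self] at hj
    have e : i0 + (j - i0) = j := by ring
    rw [e] at hj
    simpa using h3 _ _ (hnz j) hj.symm
  · simp
  · simp


/-- Let `R` be a commutative integral domain, `n ≥ 2`, and `A` an `n × n`
matrix over `R` all of whose proper principal minors equal `1`. If `det A ≠ 1`, then `A` is
conjugate by a permutation matrix to a "cyclic" matrix with `1`s on the diagonal, nonzero
entries `b i` in the positions `(i, i+1)` (indices mod `n`, so including the corner `(n,1)`),
and zeros elsewhere. -/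
theorem matrix_proper_principal_minors_one_det_ne_one_perm_cyclic
    {R : Type*} [CommRing R] [IsDomain R] {n : ℕ} [NeZero n] (hn : 2 ≤ n)
    (A : Matrix (Fin n) (Fin n) R)
    (hminors : ∀ I : Finset (Fin n), I ≠ Finset.univ →
      (A.submatrix (fun i : I => (i : Fin n)) (fun i : I => (i : Fin n))).det = 1)
    (hdet : A.det ≠ 1) :
    ∃ (σ : Equiv.Perm (Fin n)) (b : Fin n → R),
      (∀ i : Fin n, b i ≠ 0) ∧
      (∀ i : Fin n, A (σ i) (σ i) = 1) ∧
      (∀ i : Fin n, A (σ i) (σ (i + 1)) = b i) ∧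
      (∀ i j : Fin n, j ≠ i → j ≠ i + 1 → A (σ i) (σ j) = 0) := by
  classical
  have hdiag : ∀ i, A i i = 1 := by
    intro i
    have h := hminors {i} (by
      intro h
      have := congrArg Finset.card h
      simp at this
      omega)
    rw [Matrix.det_eq_elem_of_subsingleton _ (⟨i, Finset.mem_singleton_self i⟩ : ({i} : Finset (Fin n)))] at h
    simpa using h
  have hex : ∃ k : ℕ, 1 ≤ k ∧ ∃ f : ℕ → Fin n, f k = f 0 ∧
      ∀ t < k, A (f t) (f (t + 1)) ≠ 0 ∧ f t ≠ f (t + 1) := by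
    have : ∃ τ : Equiv.Perm (Fin n), τ ≠ 1 ∧ ∀ i, A i (τ i) ≠ 0 := by
      by_contra hcon
      push Not at hcon
      apply hdet
      rw [← Matrix.det_transpose, Matrix.det_apply', Finset.sum_eq_single 1]
      · simp [hdiag]
      · intro τ _ hτ
        obtain ⟨i, hi⟩ := hcon τ hτ
        rw [Finset.prod_eq_zero (Finset.mem_univ i) (by simpa using hi), mul_zero]
      · simp
    obtain ⟨τ, hτ, hnz⟩ := this
    obtain ⟨x, hx⟩ : ∃ i, τ i ≠ i := by
      by_contra hcon
      push Not at hcon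
      exact hτ (Equiv.ext hcon)
    refine ⟨orderOf τ, orderOf_pos τ, fun t => (τ ^ t) x, by simp [pow_orderOf_eq_one], ?_⟩
    intro t _
    have e : (τ ^ (t + 1)) x = τ ((τ ^ t) x) := by rw [pow_succ']; rfl
    refine ⟨by simpa only [e] using hnz _, ?_⟩
    intro h
    apply hx
    have h' : (τ ^ t) x = (τ ^ (t + 1)) x := h
    rw [pow_succ, Equiv.Perm.mul_apply] at h'
    exact ((τ ^ t).injective h').symm
  obtain ⟨hk1, f, hf0, hf⟩ := Nat.find_spec hex
  have hmin : ∀ m : ℕ, 1 ≤ m → (∃ f : ℕ → Fin n, f m = f 0 ∧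
      ∀ t < m, A (f t) (f (t + 1)) ≠ 0 ∧ f t ≠ f (t + 1)) → Nat.find hex ≤ m :=
    fun m h1 h2 => Nat.find_min' hex ⟨h1, h2⟩
  generalize Nat.find hex = k at hk1 hf0 hf hmin
  clear hex
  have hk2 : 2 ≤ k := by
    by_contra hlt
    obtain rfl : k = 1 := by omega
    exact (hf 0 (by omega)).2 hf0.symm
  have : NeZero k := ⟨by omega⟩
  have hinj' : ∀ s t, s < t → t < k → f s ≠ f t := by
    intro s t hst htk h
    have := hmin (t - s) (by omega) ⟨fun u => f (s + u), by
      simp only [Nat.add_sub_cancel' hst.le, add_zero]; exact h.symm, fun u hu => hf (s + u) (by omega)⟩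
    omega
  have hchord : ∀ s t, s < k → t < k → A (f s) (f t) ≠ 0 → f s ≠ f t →
      t = s + 1 ∨ (s + 1 = k ∧ t = 0) := by
    intro s t hs ht hA hne
    rcases lt_trichotomy s t with hst | rfl | hst
    · left
      by_contra hcon
      have := hmin (k - (t - s - 1)) (by omega)
        ⟨fun u => if u ≤ s then f u else f (u + (t - s - 1)), by
          beta_reduce
          rw [if_neg (by omega), if_pos (by omega), Nat.sub_add_cancel (by omega)]; exact hf0, by
          intro u hu
          rcases lt_trichotomy u s with h | rfl | h
          · simp only [if_pos h.le, if_pos (show u + 1 ≤ s by omega)]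
            exact hf u (by omega)
          · simp only [le_refl, if_true, if_neg (show ¬ u + 1 ≤ u by omega)]
            rw [show u + 1 + (t - u - 1) = t by omega]
            exact ⟨hA, hne⟩
          · simp only [if_neg (show ¬ u ≤ s by omega), if_neg (show ¬ u + 1 ≤ s by omega)]
            rw [show u + 1 + (t - s - 1) = u + (t - s - 1) + 1 by omega]
            exact hf _ (by omega)⟩
      omega
    · exact absurd rfl hne
    · right
      have := hmin (s - t + 1) (by omega)
        ⟨fun u => if u ≤ s - t then f (t + u) else f t, by simp, by
          intro u hu
          rcases Nat.lt_or_ge u (s - t) with h | h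
          · simp only [if_pos h.le, if_pos (show u + 1 ≤ s - t by omega)]
            exact hf (t + u) (by omega)
          · obtain rfl : u = s - t := by omega
            simp only [le_refl, if_true, if_neg (show ¬ s - t + 1 ≤ s - t by omega)]
            rw [show t + (s - t) = s by omega]
            exact ⟨hA, hne⟩⟩
      omega
  have hval : ∀ s : Fin k, (s + 1).val = (s.val + 1) % k := by
    intro s
    rw [Fin.val_add, Fin.val_one', Nat.add_mod_mod]
  have hsucc : ∀ s : Fin k, f (s + 1).val = f (s.val + 1) := by
    intro s
    rw [hval]
    rcases Nat.lt_or_ge (s.val + 1) k with h | h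
    · rw [Nat.mod_eq_of_lt h]
    · have e : s.val + 1 = k := by omega
      rw [e, Nat.mod_self, hf0]
  let g : Fin k → Fin n := fun s => f s.val
  have hg : Function.Injective g := by
    intro s t h
    rcases lt_trichotomy s.val t.val with h' | h' | h'
    · exact absurd h (hinj' _ _ h' t.2)
    · exact Fin.ext h'
    · exact absurd h.symm (hinj' _ _ h' s.2)
  have hB2 : ∀ i : Fin k, A (g i) (g (i + 1)) ≠ 0 := by
    intro i
    change A (f i.val) (f (i + 1).val) ≠ 0
    rw [hsucc]
    exact (hf _ i.2).1
  have hB3 : ∀ i j : Fin k, A (g i) (g j) ≠ 0 → i ≠ j → j = i + 1 := by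
    intro i j hA hij
    apply Fin.ext
    rw [hval]
    rcases hchord i j i.2 j.2 hA (fun h => hij (hg h)) with h | ⟨h, h'⟩
    · rw [← h, Nat.mod_eq_of_lt j.2]
    · rw [h, Nat.mod_self, h']
  have hdetB := cyc_det_ne_one hk2 (A.submatrix g g) (fun i => hdiag _) hB2 hB3
  have huniv : Finset.univ.image g = Finset.univ := by
    by_contra hI
    have hm := hminors _ hI
    let e : Fin k ≃ (Finset.univ.image g : Finset (Fin n)) :=
      Equiv.ofBijective (fun i => ⟨g i, Finset.mem_image_of_mem g (Finset.mem_univ i)⟩)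
        ⟨fun i j h => hg (congrArg Subtype.val h), by
          rintro ⟨y, hy⟩
          obtain ⟨i, -, rfl⟩ := Finset.mem_image.1 hy
          exact ⟨i, rfl⟩⟩
    rw [← Matrix.det_submatrix_equiv_self e, Matrix.submatrix_submatrix] at hm
    exact hdetB hm
  have hsurj : Function.Surjective g := by
    intro y
    have := Finset.mem_univ y
    rw [← huniv] at this
    obtain ⟨i, -, h⟩ := Finset.mem_image.1 this
    exact ⟨i, h⟩
  obtain rfl : k = n := by
    simpa using Fintype.card_of_bijective (f := g) ⟨hg, hsurj⟩
  refine ⟨Equiv.ofBijective g ⟨hg, hsurj⟩, fun i => A (g i) (g (i + 1)), hB2, fun i => hdiag _,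
    fun i => rfl, ?_⟩
  intro i j hji hji1
  by_contra hA
  exact hji1 (hB3 i j hA hji.symm)
end

section
/- Let S be a BQ-algebra of rank n over ℤ/2 with degree-one generators x_1,…,x_n. For a subset I ⊆ {1,…,n}, write x_I for the square-free monomial ∏_{i ∈ I} x_i (with x_∅ = 1). Then the 2ⁿ elements x_I, as I ranges over all subsets of {1,…,n}, form a basis of S as a vector space over ℤ/2. In particular, the graded component S_q has dimension equal to the binomial coefficient C(n,q) for every q. -/
theorem bq_sq_mul {S : Type*} [CommRing S] [Algebra (ZMod 2) S] {n : ℕ} (x : Fin n → S)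
    (a : Fin n → Fin n → ZMod 2)
    (ha : ∀ k, x k ^ 2 = ∑ i ∈ Finset.univ.filter (fun i => i < k), a k i • (x i * x k))
    (I : Finset (Fin n)) (i : Fin n) (hi : i ∈ I) :
    x i * ∏ j ∈ I, x j =
      ∑ j ∈ Finset.univ.filter (fun j => j < i), a i j • (x j * ∏ j ∈ I, x j) := by
  rw [← Finset.mul_prod_erase I x hi, ← mul_assoc, ← pow_two, ha, Finset.sum_mul]
  refine Finset.sum_congr rfl fun j _ => ?_
  rw [smul_mul_assoc, mul_assoc]

theorem bq_mul_mem {S : Type*} [CommRing S] [Algebra (ZMod 2) S] {n : ℕ} (x : Fin n → S)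
    (a : Fin n → Fin n → ZMod 2)
    (ha : ∀ k, x k ^ 2 = ∑ i ∈ Finset.univ.filter (fun i => i < k), a k i • (x i * x k))
    (I : Finset (Fin n)) (i : Fin n) :
    x i * ∏ j ∈ I, x j ∈ Submodule.span (ZMod 2)
        (Set.range (fun I : Finset (Fin n) => ∏ i ∈ I, x i)) := by
  induction i using WellFoundedLT.induction with
  | ind i ih =>
    by_cases hi : i ∈ I
    · rw [bq_sq_mul x a ha I i hi]
      refine Submodule.sum_mem _ fun j hj => Submodule.smul_mem _ _ (ih j ?_)
      simpa using hj
    · rw [← Finset.prod_insert hi]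
      exact Submodule.subset_span ⟨_, rfl⟩

theorem bq_top_mul {S : Type*} [CommRing S] [Algebra (ZMod 2) S] {n : ℕ} (x : Fin n → S)
    (a : Fin n → Fin n → ZMod 2)
    (ha : ∀ k, x k ^ 2 = ∑ i ∈ Finset.univ.filter (fun i => i < k), a k i • (x i * x k))
    (k : ℕ) (i : Fin n) (hi : i.val < k) :
    x i * ∏ j ∈ Finset.univ.filter (fun j : Fin n => j.val < k), x j = 0 := by
  induction i using WellFoundedLT.induction with
  | ind i ih =>
    rw [bq_sq_mul x a ha _ i (by simpa using hi)]
    refine Finset.sum_eq_zero fun j hj => ?_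
    have hj' : j < i := by simpa using hj
    rw [ih j hj' (lt_trans hj' hi), smul_zero]

theorem bq_prod_eq {S : Type*} [CommRing S] [Algebra (ZMod 2) S] {n : ℕ} (x : Fin n → S)
    (a : Fin n → Fin n → ZMod 2)
    (ha : ∀ k, x k ^ 2 = ∑ i ∈ Finset.univ.filter (fun i => i < k), a k i • (x i * x k))
    (J : Finset (Fin n)) (k : ℕ) :
    ∏ j ∈ Finset.univ.filter (fun j : Fin n => j.val < k),
      (if j ∈ J then x j else
        x j - ∑ i ∈ Finset.univ.filter (fun i => i < j), a j i • x i) =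
    ∏ j ∈ Finset.univ.filter (fun j : Fin n => j.val < k), x j := by
  induction k with
  | zero => simp
  | succ k ih =>
    by_cases hk : k < n
    · have hs : Finset.univ.filter (fun j : Fin n => j.val < k + 1) =
          insert (⟨k, hk⟩ : Fin n) (Finset.univ.filter (fun j : Fin n => j.val < k)) := by
        ext j
        simp [Fin.ext_iff]
        omega
      have hn : (⟨k, hk⟩ : Fin n) ∉ Finset.univ.filter (fun j : Fin n => j.val < k) := by simp
      rw [hs, Finset.prod_insert hn, Finset.prod_insert hn, ih]
      split_ifs with h
      · rfl
      · rw [sub_mul, Finset.sum_mul, sub_eq_self]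
        refine Finset.sum_eq_zero fun j hj => ?_
        have hj' : j < ⟨k, hk⟩ := by simpa using hj
        rw [smul_mul_assoc, bq_top_mul x a ha k j hj', smul_zero]
    · have hs : Finset.univ.filter (fun j : Fin n => j.val < k + 1) =
          (Finset.univ.filter (fun j : Fin n => j.val < k)) := by
        ext j
        simp
        omega
      rw [hs, ih]

/-- Let `S` be a BQ-algebra of rank `n` over `ℤ/2`: a graded commutative
`ℤ/2`-algebra generated by degree-one elements `x_1, …, x_n` such that
(P1) `x_k² = Σ_{i<k} a_{ik} x_i x_k` for some `a_{ik} ∈ ℤ/2`, and (P2) `x_1 ⋯ x_n ≠ 0`.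
Then the `2ⁿ` square-free monomials `x_I = ∏_{i ∈ I} x_i`, for `I ⊆ {1, …, n}`, form a
basis of `S` over `ℤ/2`; in particular `dim S_q = C(n, q)` for every `q`. -/
theorem bq_algebra_squarefree_monomials_basis
    {S : Type*} [CommRing S] [Algebra (ZMod 2) S]
    (𝒜 : ℕ → Submodule (ZMod 2) S) [GradedRing 𝒜]
    {n : ℕ} (x : Fin n → S)
    (hx1 : ∀ i, x i ∈ 𝒜 1)
    (hgen : Algebra.adjoin (ZMod 2) (Set.range x) = ⊤)
    (hP1 : ∀ k : Fin n, ∃ a : Fin n → ZMod 2,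
      x k ^ 2 = ∑ i ∈ Finset.univ.filter (fun i => i < k), a i • (x i * x k))
    (hP2 : ∏ i, x i ≠ 0) :
    (LinearIndependent (ZMod 2) (fun I : Finset (Fin n) => ∏ i ∈ I, x i) ∧
      Submodule.span (ZMod 2)
        (Set.range (fun I : Finset (Fin n) => ∏ i ∈ I, x i)) = ⊤) ∧
    ∀ q : ℕ, Module.finrank (ZMod 2) (𝒜 q) = n.choose q := by
  choose a ha using hP1
  have hspan : Submodule.span (ZMod 2)
      (Set.range (fun I : Finset (Fin n) => ∏ i ∈ I, x i)) = ⊤ := by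
    rw [eq_top_iff]
    intro s _
    have hs : s ∈ Algebra.adjoin (ZMod 2) (Set.range x) := by rw [hgen]; trivial
    suffices h : ∀ t ∈ Submodule.span (ZMod 2)
        (Set.range (fun I : Finset (Fin n) => ∏ i ∈ I, x i)), s * t ∈ Submodule.span (ZMod 2)
        (Set.range (fun I : Finset (Fin n) => ∏ i ∈ I, x i)) by
      have := h 1 (Submodule.subset_span ⟨∅, by simp⟩)
      simpa using this
    induction hs using Algebra.adjoin_induction with
    | mem y hy =>
      obtain ⟨i, rfl⟩ := hy
      intro t ht
      induction ht using Submodule.span_induction with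
      | mem t ht =>
        obtain ⟨I, rfl⟩ := ht
        exact bq_mul_mem x a ha I i
      | zero => simp
      | add u v _ _ hu hv => rw [mul_add]; exact Submodule.add_mem _ hu hv
      | smul c u _ hu => rw [mul_smul_comm]; exact Submodule.smul_mem _ _ hu
    | algebraMap r =>
      intro t ht
      rw [← Algebra.smul_def]
      exact Submodule.smul_mem _ _ ht
    | add u v _ _ hu hv =>
      intro t ht
      rw [add_mul]
      exact Submodule.add_mem _ (hu trivial t ht) (hv trivial t ht)
    | mul u v _ _ hu hv =>
      intro t ht
      rw [mul_assoc]
      exact hu trivial _ (hv trivial t ht)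
  have hli : LinearIndependent (ZMod 2) (fun I : Finset (Fin n) => ∏ i ∈ I, x i) := by
    rw [Fintype.linearIndependent_iff]
    intro c hc
    by_contra! hne
    obtain ⟨J0, hJ0⟩ := hne
    obtain ⟨J, hJ, hmin⟩ := (Finset.univ.filter fun I => c I ≠ 0).exists_min_image
      (fun I => I.card) ⟨J0, by simpa using hJ0⟩
    have hJ' : c J ≠ 0 := by simpa using hJ
    let y : Fin n → S := fun j =>
      x j - ∑ i ∈ Finset.univ.filter (fun i => i < j), a j i • x i
    have hxy : ∀ j, x j * y j = 0 := by
      intro j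
      simp only [y]
      rw [mul_sub, ← pow_two, ha, Finset.mul_sum, sub_eq_zero]
      refine Finset.sum_congr rfl fun i _ => ?_
      rw [mul_smul_comm, mul_comm]
    have htop : (∏ i ∈ J, x i) * ∏ i ∈ Jᶜ, y i = ∏ i, x i := by
      have h := bq_prod_eq x a ha J n
      have hu : Finset.univ.filter (fun j : Fin n => j.val < n) = Finset.univ := by
        ext j; simp
      rw [hu] at h
      rw [← h, ← Finset.prod_mul_prod_compl J]
      congr 1
      · exact Finset.prod_congr rfl fun i hi => by rw [if_pos hi]
      · exact Finset.prod_congr rfl fun i hi => by rw [if_neg (by simpa using hi)]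
    have h0 : (∑ I, c I • ∏ i ∈ I, x i) * ∏ i ∈ Jᶜ, y i = c J • ∏ i, x i := by
      rw [Finset.sum_mul, Finset.sum_eq_single J, smul_mul_assoc, htop]
      · intro I _ hIJ
        by_cases hcI : c I = 0
        · simp [hcI]
        have hle := hmin I (by simpa using hcI)
        have hns : ¬ I ⊆ J := fun hs => hIJ (Finset.eq_of_subset_of_card_le hs hle)
        obtain ⟨i, hi, hiJ⟩ := Finset.not_subset.mp hns
        have hiJ' : i ∈ Jᶜ := by simpa using hiJ
        rw [smul_mul_assoc, ← Finset.mul_prod_erase I x hi, ← Finset.mul_prod_erase Jᶜ y hiJ',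
          mul_mul_mul_comm, hxy, zero_mul, smul_zero]
      · simp
    rw [hc, zero_mul] at h0
    haveI : Fact (Nat.Prime 2) := ⟨Nat.prime_two⟩
    exact (smul_ne_zero hJ' hP2) h0.symm
  refine ⟨⟨hli, hspan⟩, fun q => ?_⟩
  have hdeg : ∀ I : Finset (Fin n), ∏ i ∈ I, x i ∈ 𝒜 I.card := by
    intro I
    have := SetLike.prod_mem_graded 𝒜 (fun _ => 1) x (F := I) (fun i _ => hx1 i)
    simpa using this
  have hA : 𝒜 q = Submodule.span (ZMod 2)
      (Set.range (fun I : {I : Finset (Fin n) // I.card = q} => ∏ i ∈ I.1, x i)) := by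
    apply le_antisymm
    · intro s hs
      have hs' : s ∈ Submodule.span (ZMod 2)
        (Set.range (fun I : Finset (Fin n) => ∏ i ∈ I, x i)) := by rw [hspan]; trivial
      have key : ∀ t ∈ Submodule.span (ZMod 2)
        (Set.range (fun I : Finset (Fin n) => ∏ i ∈ I, x i)),
          ((DirectSum.decompose 𝒜 t q : 𝒜 q) : S) ∈ Submodule.span (ZMod 2)
            (Set.range (fun I : {I : Finset (Fin n) // I.card = q} => ∏ i ∈ I.1, x i)) := by
        intro t ht
        induction ht using Submodule.span_induction with
        | mem t ht =>
          obtain ⟨I, rfl⟩ := ht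
          by_cases hI : I.card = q
          · have h2 := hdeg I
            rw [hI] at h2
            simp only
            rw [DirectSum.decompose_of_mem_same 𝒜 h2]
            exact Submodule.subset_span ⟨⟨I, hI⟩, rfl⟩
          · simp only
            rw [DirectSum.decompose_of_mem_ne 𝒜 (hdeg I) hI]
            exact Submodule.zero_mem _
        | zero => simp
        | add u v _ _ hu hv => simpa using Submodule.add_mem _ hu hv
        | smul c u _ hu =>
          rw [DirectSum.decompose_smul]
          exact Submodule.smul_mem _ c hu
      have := key s hs'
      rwa [DirectSum.decompose_of_mem_same 𝒜 hs] at this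
    · rw [Submodule.span_le]
      rintro _ ⟨⟨I, rfl⟩, rfl⟩
      exact hdeg I
  haveI : Fact (Nat.Prime 2) := ⟨Nat.prime_two⟩
  have hli' : LinearIndependent (ZMod 2)
      (fun I : {I : Finset (Fin n) // I.card = q} => ∏ i ∈ I.1, x i) :=
    hli.comp Subtype.val Subtype.val_injective
  rw [hA, finrank_span_eq_card hli', Fintype.card_finset_len, Fintype.card_fin]
end

section
/- Let S be a BQ-algebra of rank n over ℤ/2 with degree-one generators x_1,…,x_n, let S' be a graded ℤ/2-algebra with S'_{n−1} ≠ 0, and let f : S → S' be a surjective homomorphism of graded ℤ/2-algebras (so f(S_q) ⊆ S'_q for all q). Then the kernel of the induced ℤ/2-linear map f : S_1 → S'_1 has dimension at most one over ℤ/2. -/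
lemma bqaux_graded {R : Type*} [CommRing R] [Algebra (ZMod 2) R]
    (ℬ : ℕ → Submodule (ZMod 2) R) [GradedRing ℬ] {ι : Type*} (y : ι → R)
    (hy : ∀ i, y i ∈ ℬ 1) (hgen : Algebra.adjoin (ZMod 2) (Set.range y) = ⊤) (q : ℕ) :
    ℬ q ≤ (Submodule.span (ZMod 2) (Set.range y)) ^ q := by
  set W := Submodule.span (ZMod 2) (Set.range y) with hW
  have hW1 : W ≤ ℬ 1 := by
    rw [hW, Submodule.span_le]
    rintro _ ⟨i, rfl⟩
    exact hy i
  have hWq : ∀ r, W ^ r ≤ ℬ r := by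
    intro r
    induction r with
    | zero =>
      rw [pow_zero, Submodule.one_le]
      exact SetLike.GradedOne.one_mem
    | succ r ih =>
      rw [pow_succ, Submodule.mul_le]
      intro a ha b hb
      exact SetLike.GradedMul.mul_mem (ih ha) (hW1 hb)
  have hmon : ∀ s ∈ Submonoid.closure (Set.range y), ∃ r, s ∈ W ^ r := by
    intro s hs
    induction hs using Submonoid.closure_induction with
    | mem a ha => exact ⟨1, by rw [pow_one]; exact Submodule.subset_span ha⟩
    | one => exact ⟨0, by rw [pow_zero]; exact Submodule.one_le.mp le_rfl⟩
    | mul a b _ _ iha ihb =>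
      obtain ⟨r, hr⟩ := iha
      obtain ⟨t, ht⟩ := ihb
      exact ⟨r + t, by rw [pow_add]; exact Submodule.mul_mem_mul hr ht⟩
  have key : ∀ s : R, (DirectSum.decompose ℬ s q : R) ∈ W ^ q := by
    intro s
    have hs : s ∈ Submodule.span (ZMod 2) (Submonoid.closure (Set.range y) : Set R) := by
      rw [← Algebra.adjoin_eq_span, hgen]; trivial
    induction hs using Submodule.span_induction with
    | mem a ha =>
      obtain ⟨r, hr⟩ := hmon a ha
      by_cases h : r = q
      · subst h
        rw [DirectSum.decompose_of_mem_same ℬ (hWq r hr)]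
        exact hr
      · rw [DirectSum.decompose_of_mem_ne ℬ (hWq r hr) h]
        exact zero_mem _
    | zero => simp
    | add a b _ _ iha ihb =>
      rw [DirectSum.decompose_add]
      simpa using add_mem iha ihb
    | smul c a _ iha =>
      rw [DirectSum.decompose_smul]
      exact Submodule.smul_mem _ c iha
  intro b hb
  have := key b
  rwa [DirectSum.decompose_of_mem_same ℬ hb] at this

lemma bqaux_step {R : Type*} [CommRing R] [Algebra (ZMod 2) R]
    (V L : Submodule (ZMod 2) R) (hL : L * L ≤ V * L) (m : ℕ) :
    (V ⊔ L) ^ (m + 1) ≤ V ^ (m + 1) ⊔ V ^ m * L := by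
  induction m with
  | zero => simp
  | succ m ih =>
    rw [pow_succ]
    refine (mul_le_mul' ih le_rfl).trans ?_
    rw [Submodule.mul_sup, Submodule.sup_mul, Submodule.sup_mul, ← pow_succ]
    refine sup_le (sup_le le_sup_left ?_) (sup_le le_sup_right ?_)
    · rw [mul_assoc, mul_comm L V, ← mul_assoc, ← pow_succ]
      exact le_sup_right
    · rw [mul_assoc]
      refine (mul_le_mul' le_rfl hL).trans ?_
      rw [← mul_assoc, ← pow_succ]
      exact le_sup_right

lemma bqaux_nil {R : Type*} [CommRing R] [Algebra (ZMod 2) R] {n : ℕ} (y : Fin n → R)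
    (hP1 : ∀ k : Fin n, ∃ a : Fin n → ZMod 2,
      y k ^ 2 = ∑ i ∈ Finset.univ.filter (fun i => i < k), a i • (y i * y k)) (j : ℕ)
    (hj : j ≤ n) :
    (Submodule.span (ZMod 2) (y '' {i | i.val < j})) ^
      (Module.finrank (ZMod 2) (Submodule.span (ZMod 2) (y '' {i | i.val < j})) + 1) = ⊥ := by
  induction j with
  | zero => simp
  | succ j ih =>
    have ih := ih (by omega)
    let k : Fin n := ⟨j, hj⟩
    have hset : {i : Fin n | i.val < j + 1} = insert k {i | i.val < j} := by
      ext i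
      simp only [Set.mem_ofPred_eq, Set.mem_insert_iff, Fin.ext_iff, k]
      omega
    rw [hset, Set.image_insert_eq]
    set V := Submodule.span (ZMod 2) (y '' {i | i.val < j}) with hV
    by_cases hk : y k ∈ V
    · rw [Submodule.span_insert_eq_span hk]
      exact ih
    · have hfin : FiniteDimensional (ZMod 2) V :=
        FiniteDimensional.span_of_finite _ (Set.toFinite _)
      have hspan : Submodule.span (ZMod 2) (insert (y k) (y '' {i | i.val < j})) =
          V ⊔ Submodule.span (ZMod 2) {y k} := by
        rw [Submodule.span_insert, sup_comm]
      rw [hspan]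
      set L := Submodule.span (ZMod 2) {y k} with hLd
      have hL : L * L ≤ V * L := by
        rw [hLd, Submodule.span_mul_span, Submodule.span_le]
        rintro _ ⟨a, rfl, b, rfl, rfl⟩
        obtain ⟨a, ha⟩ := hP1 k
        change y k * y k ∈ V * L
        rw [← pow_two, ha]
        refine Submodule.sum_mem _ fun i hi => Submodule.smul_mem _ _ ?_
        refine Submodule.mul_mem_mul (Submodule.subset_span ⟨i, ?_, rfl⟩)
          (Submodule.mem_span_singleton_self _)
        simpa [k, Fin.lt_def] using hi
      have hlt : Module.finrank (ZMod 2) V <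
          Module.finrank (ZMod 2) (V ⊔ L : Submodule (ZMod 2) R) := by
        apply Submodule.finrank_lt_finrank_of_lt
        refine lt_of_le_of_ne le_sup_left fun h => hk ?_
        rw [h]
        exact Submodule.mem_sup_right (Submodule.mem_span_singleton_self _)
      obtain ⟨c, hc⟩ := Nat.exists_eq_add_of_lt hlt
      rw [hc, eq_bot_iff]
      have e : Module.finrank (ZMod 2) V + c + 1 + 1 =
        (Module.finrank (ZMod 2) V + 1 + c) + 1 := by omega
      rw [e]
      refine (bqaux_step V L hL _).trans ?_
      simp [pow_succ _ (_ + 1 + c), pow_add _ (_ + 1) c, ih]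

/-- Let `S` be a BQ-algebra of rank `n` over `ℤ/2` with degree-one
generators `x_1, …, x_n`, let `S'` be a graded `ℤ/2`-algebra with `S'_{n-1} ≠ 0`, and let
`f : S → S'` be a surjective homomorphism of graded `ℤ/2`-algebras. Then the kernel of the
induced linear map `S_1 → S'_1` has dimension at most one over `ℤ/2`. -/
theorem bq_algebra_quotient_kernel_dim_le_one
    {S : Type*} [CommRing S] [Algebra (ZMod 2) S]
    (𝒜 : ℕ → Submodule (ZMod 2) S) [GradedRing 𝒜]
    {S' : Type*} [CommRing S'] [Algebra (ZMod 2) S']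
    (ℬ : ℕ → Submodule (ZMod 2) S') [GradedRing ℬ]
    {n : ℕ} (x : Fin n → S)
    (hx1 : ∀ i, x i ∈ 𝒜 1)
    (hgen : Algebra.adjoin (ZMod 2) (Set.range x) = ⊤)
    (hP1 : ∀ k : Fin n, ∃ a : Fin n → ZMod 2,
      x k ^ 2 = ∑ i ∈ Finset.univ.filter (fun i => i < k), a i • (x i * x k))
    (hP2 : ∏ i, x i ≠ 0)
    (f : S →ₐ[ZMod 2] S') (hf : Function.Surjective f)
    (hgr : ∀ q : ℕ, ∀ s ∈ 𝒜 q, f s ∈ ℬ q)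
    (hB : ℬ (n - 1) ≠ ⊥) :
    Module.finrank (ZMod 2)
      (LinearMap.ker (f.toLinearMap.restrict (p := 𝒜 1) (q := ℬ 1) (hgr 1))) ≤ 1 := by
  set y : Fin n → S' := fun i => f (x i) with hy
  have hyP : ∀ k : Fin n, ∃ a : Fin n → ZMod 2,
      y k ^ 2 = ∑ i ∈ Finset.univ.filter (fun i => i < k), a i • (y i * y k) := by
    intro k
    obtain ⟨a, ha⟩ := hP1 k
    refine ⟨a, ?_⟩
    have := congrArg f ha
    simpa [map_sum, map_smul] using this
  have hygen : Algebra.adjoin (ZMod 2) (Set.range y) = ⊤ := by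
    have : Set.range y = f '' Set.range x := by
      rw [← Set.range_comp]; rfl
    rw [this, ← AlgHom.map_adjoin, hgen, Algebra.map_top]
    exact (AlgHom.range_eq_top f).mpr hf
  have hA1 : 𝒜 1 = Submodule.span (ZMod 2) (Set.range x) := by
    apply le_antisymm
    · simpa using bqaux_graded 𝒜 x hx1 hgen 1
    · rw [Submodule.span_le]
      rintro _ ⟨i, rfl⟩
      exact hx1 i
  have hBn := bqaux_graded ℬ y (fun i => hgr 1 _ (hx1 i)) hygen (n - 1)
  have hnil := bqaux_nil y hyP n le_rfl
  have huniv : {i : Fin n | i.val < n} = Set.univ := by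
    ext i; simp
  rw [huniv, Set.image_univ] at hnil
  have hfinA : FiniteDimensional (ZMod 2) (𝒜 1) := by
    rw [hA1]
    exact FiniteDimensional.span_of_finite _ (Set.toFinite _)
  have hdimA : Module.finrank (ZMod 2) (𝒜 1) ≤ n := by
    rw [hA1]
    simpa [Set.finrank] using finrank_range_le_card (R := ZMod 2) x
  set g := f.toLinearMap.restrict (p := 𝒜 1) (q := ℬ 1) (hgr 1) with hg
  have hrk := LinearMap.finrank_range_add_finrank_ker g
  have hV : Module.finrank (ZMod 2) (Submodule.span (ZMod 2) (Set.range y)) ≤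
      Module.finrank (ZMod 2) (LinearMap.range g) := by
    have hle : Submodule.span (ZMod 2) (Set.range y) ≤
        (LinearMap.range g).map (ℬ 1).subtype := by
      rw [Submodule.span_le]
      rintro _ ⟨i, rfl⟩
      exact ⟨g ⟨x i, hx1 i⟩, ⟨_, rfl⟩, rfl⟩
    exact (Submodule.finrank_mono hle).trans (Submodule.finrank_map_le _ _)
  by_contra hcon
  apply hB
  rw [eq_bot_iff]
  refine hBn.trans ?_
  obtain ⟨c, hc⟩ : ∃ c, n - 1 = Module.finrank (ZMod 2)
      (Submodule.span (ZMod 2) (Set.range y)) + 1 + c :=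
    Nat.exists_eq_add_of_le (by omega)
  rw [hc, pow_add, hnil]
  simp
end

section
/- For an integer m, let R_m denote the commutative ring ℤ[u,v]/(u², v² − m·u·v). Then for integers m and m', the rings R_m and R_{m'} are isomorphic as rings if and only if m ≡ m' (mod 2). -/
open MvPolynomial

/-- The ring `R_m = ℤ[u,v]/(u², v² − m·u·v)`, the integral cohomology ring of the
Hirzebruch surface `P(ℂ ⊕ γᵐ)`, with `u = X 0` and `v = X 1`. -/
abbrev HirzebruchCohomologyRing (m : ℤ) : Type :=
  MvPolynomial (Fin 2) ℤ ⧸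
    Ideal.span ({X 0 ^ 2, X 1 ^ 2 - C m * (X 0 * X 1)} : Set (MvPolynomial (Fin 2) ℤ))

section HirzAux

theorem hirz_u_sq (m : ℤ) :
    (Ideal.Quotient.mk _ (X 0) : HirzebruchCohomologyRing m) ^ 2 = 0 := by
  rw [← map_pow]
  exact Ideal.Quotient.eq_zero_iff_mem.2 (Ideal.subset_span (by simp))

theorem hirz_v_sq (m : ℤ) :
    (Ideal.Quotient.mk _ (X 1) : HirzebruchCohomologyRing m) ^ 2 =
      (m : HirzebruchCohomologyRing m) *
        ((Ideal.Quotient.mk _ (X 0)) * (Ideal.Quotient.mk _ (X 1))) := by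
  have h : (Ideal.Quotient.mk _ (X 1 ^ 2 - C m * (X 0 * X 1)) :
      HirzebruchCohomologyRing m) = 0 :=
    Ideal.Quotient.eq_zero_iff_mem.2 (Ideal.subset_span (by simp))
  have hC : (C m : MvPolynomial (Fin 2) ℤ) = ((m : ℤ) : MvPolynomial (Fin 2) ℤ) := by simp
  rw [hC] at h
  simp only [map_sub, map_mul, map_pow, map_intCast] at h
  exact sub_eq_zero.1 h

/-- The universal property. -/
noncomputable def hirzLift {S : Type} [CommRing S] (m : ℤ) (a b : S) (ha : a ^ 2 = 0)
    (hb : b ^ 2 = (m : S) * (a * b)) : HirzebruchCohomologyRing m →+* S :=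
  Ideal.Quotient.lift _ (eval₂Hom (Int.castRingHom S) ![a, b]) (by
    intro p hp
    rw [← RingHom.mem_ker]
    refine (Ideal.span_le (I := RingHom.ker _)).2 ?_ hp
    clear hp p
    intro p hp
    rcases hp with rfl | hp
    · simp [RingHom.mem_ker, ha]
    · rw [Set.mem_singleton_iff] at hp
      subst hp
      have hC : eval₂Hom (Int.castRingHom S) ![a, b] (C m) = (m : S) :=
        eval₂Hom_C _ _ _
      rw [SetLike.mem_coe, RingHom.mem_ker, map_sub, map_mul, hC]
      simp [hb])

theorem hirzLift_u {S : Type} [CommRing S] (m : ℤ) (a b : S) (ha : a ^ 2 = 0)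
    (hb : b ^ 2 = (m : S) * (a * b)) :
    hirzLift m a b ha hb (Ideal.Quotient.mk _ (X 0)) = a := by
  simp [hirzLift]

theorem hirzLift_v {S : Type} [CommRing S] (m : ℤ) (a b : S) (ha : a ^ 2 = 0)
    (hb : b ^ 2 = (m : S) * (a * b)) :
    hirzLift m a b ha hb (Ideal.Quotient.mk _ (X 1)) = b := by
  simp [hirzLift]

theorem hirz_hom_ext {S : Type} [CommRing S] (m : ℤ) (f g : HirzebruchCohomologyRing m →+* S)
    (h0 : f (Ideal.Quotient.mk _ (X 0)) = g (Ideal.Quotient.mk _ (X 0)))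
    (h1 : f (Ideal.Quotient.mk _ (X 1)) = g (Ideal.Quotient.mk _ (X 1))) : f = g := by
  apply Ideal.Quotient.ringHom_ext
  apply MvPolynomial.ringHom_ext
  · intro r
    simp
  · intro i
    fin_cases i
    · exact h0
    · exact h1

/-- The shear homomorphism `u ↦ u`, `v ↦ v + k u`. -/
noncomputable def hirzShear (m m' k : ℤ) (h : m = m' + 2 * k) :
    HirzebruchCohomologyRing m →+* HirzebruchCohomologyRing m' :=
  hirzLift m (Ideal.Quotient.mk _ (X 0))
    (Ideal.Quotient.mk _ (X 1) + (k : HirzebruchCohomologyRing m') * Ideal.Quotient.mk _ (X 0))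
    (hirz_u_sq m') (by
      have hu := hirz_u_sq m'
      have hv := hirz_v_sq m'
      subst h
      push_cast
      linear_combination hv + ((k : HirzebruchCohomologyRing m') ^ 2
        - (m' + 2 * k : HirzebruchCohomologyRing m') * k) * hu)

theorem hirzShear_comp (m m' k : ℤ) (h : m = m' + 2 * k) (h' : m' = m + 2 * (-k)) :
    (hirzShear m' m (-k) h').comp (hirzShear m m' k h) = RingHom.id _ := by
  apply hirz_hom_ext
  · simp [hirzShear, hirzLift_u]
  · simp only [hirzShear, hirzLift_u, hirzLift_v, RingHom.comp_apply, RingHom.id_apply, map_add,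
      map_mul, map_intCast]
    push_cast
    ring

/-- Every square is an integer modulo two. -/
def HirzSq (S : Type) [CommRing S] : Prop := ∀ x : S, ∃ (d : ℤ) (y : S), x ^ 2 = d + 2 * y

theorem hirzSq_of_even (m : ℤ) (hm : Even m) : HirzSq (HirzebruchCohomologyRing m) := by
  intro x
  obtain ⟨p, rfl⟩ := Ideal.Quotient.mk_surjective x
  induction p using MvPolynomial.induction_on with
  | C a =>
    refine ⟨a ^ 2, 0, ?_⟩
    have hC : (C a : MvPolynomial (Fin 2) ℤ) = ((a : ℤ) : MvPolynomial (Fin 2) ℤ) := by simp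
    rw [hC, map_intCast]
    push_cast
    ring
  | add p q hp hq =>
    obtain ⟨d, y, hd⟩ := hp
    obtain ⟨e, z, he⟩ := hq
    refine ⟨d + e, y + z + Ideal.Quotient.mk _ p * Ideal.Quotient.mk _ q, ?_⟩
    rw [map_add]
    push_cast
    linear_combination hd + he
  | mul_X p i hp =>
    obtain ⟨d, y, hd⟩ := hp
    obtain ⟨n, hn⟩ := hm
    rw [map_mul, mul_pow]
    fin_cases i
    · refine ⟨0, 0, ?_⟩
      have := hirz_u_sq m
      simp [this]
    · refine ⟨0, Ideal.Quotient.mk _ p ^ 2 * ((n : HirzebruchCohomologyRing m) *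
        ((Ideal.Quotient.mk _ (X 0)) * (Ideal.Quotient.mk _ (X 1)))), ?_⟩
      have h := hirz_v_sq m
      have hmn : (m : HirzebruchCohomologyRing m) = 2 * n := by
        have : m = 2 * n := by omega
        exact_mod_cast congrArg (Int.cast : ℤ → HirzebruchCohomologyRing m) this
      rw [hmn] at h
      simp only [Fin.mk_one, Int.cast_zero]
      rw [h]
      ring

/-- The ring with `u² = 0`, `v² = u v` over the field with two elements. -/
abbrev HirzT : Type := QuadraticAlgebra (DualNumber (ZMod 2)) 0 (DualNumber.eps)

theorem even_of_hirzSq (m : ℤ) (h : HirzSq (HirzebruchCohomologyRing m)) : Even m := by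
  by_contra hm
  rw [Int.not_even_iff_odd] at hm
  have h2 : (2 : HirzT) = 0 := by
    have h3 : (2 : ZMod 2) = 0 := by decide
    have := congrArg (algebraMap (ZMod 2) HirzT) h3
    rwa [map_ofNat, map_zero] at this
  obtain ⟨n, hn⟩ := hm
  have hmT : (m : HirzT) = 1 := by
    rw [hn, Int.cast_add, Int.cast_mul, Int.cast_ofNat, h2, zero_mul, zero_add, Int.cast_one]
  let a : HirzT := ⟨DualNumber.eps, 0⟩
  let b : HirzT := ⟨0, 1⟩
  have ha : a ^ 2 = 0 := by
    rw [sq]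
    ext <;> simp [a]
  have hb : b ^ 2 = (m : HirzT) * (a * b) := by
    rw [hmT, one_mul, sq]
    ext <;> simp [a, b]
  let f := hirzLift m a b ha hb
  obtain ⟨d, y, hd⟩ := h (Ideal.Quotient.mk _ (X 1))
  have h3 := congrArg f hd
  rw [map_pow, map_add, map_mul, map_intCast, map_ofNat, h2, zero_mul, add_zero] at h3
  rw [show f (Ideal.Quotient.mk _ (X 1)) = b from hirzLift_v m a b ha hb, sq] at h3
  have h4 := congrArg (fun t : HirzT => t.im.snd) h3
  simp [b] at h4

theorem hirzSq_congr {S T : Type} [CommRing S] [CommRing T] (e : S ≃+* T) (h : HirzSq S) :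
    HirzSq T := by
  intro x
  obtain ⟨d, y, hd⟩ := h (e.symm x)
  refine ⟨d, e y, ?_⟩
  have := congrArg e hd
  simpa [map_ofNat e 2] using this

end HirzAux

/-- For integers `m` and `m'`, the rings
`R_m = ℤ[u,v]/(u², v² − m·u·v)` and `R_{m'}` are isomorphic as rings if and only if
`m ≡ m' (mod 2)`. -/
theorem hirzebruchCohomologyRing_iso_iff_mod_two (m m' : ℤ) :
    Nonempty (HirzebruchCohomologyRing m ≃+* HirzebruchCohomologyRing m') ↔
      m ≡ m' [ZMOD 2] := by
  constructor
  · rintro ⟨e⟩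
    have h : Even m ↔ Even m' :=
      ⟨fun h => even_of_hirzSq m' (hirzSq_congr e (hirzSq_of_even m h)),
        fun h => even_of_hirzSq m (hirzSq_congr e.symm (hirzSq_of_even m' h))⟩
    rw [Int.even_iff, Int.even_iff] at h
    unfold Int.ModEq
    omega
  · intro h
    obtain ⟨k, hk⟩ := h.symm.dvd
    have h1 : m = m' + 2 * k := by omega
    have h2 : m' = m + 2 * (-k) := by omega
    refine ⟨RingEquiv.ofRingHom (hirzShear m m' k h1) (hirzShear m' m (-k) h2) ?_
      (hirzShear_comp m m' k h1 h2)⟩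
    have := hirzShear_comp m' m (-k) h2 (by omega)
    simpa only [neg_neg] using this
end

section
/- Let n ≥ 2 and let b_1,…,b_n be integers with b_1 b_2 ⋯ b_n = (−1)ⁿ · 2. Suppose a_1,…,a_n are rational numbers satisfying the cyclic system of equations a_i² · b_i = 2 · a_i · a_{i+1} for 1 ≤ i ≤ n−1, together with a_n² · b_n = 2 · a_n · a_1. Then a_i = 0 for every i. -/
/-- Let `n ≥ 2` and let `b_1, …, b_n` be integers with
`b_1 b_2 ⋯ b_n = (−1)ⁿ · 2`. If rational numbers `a_1, …, a_n` satisfy the cyclic system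
`a_i² · b_i = 2 · a_i · a_{i+1}` (indices mod `n`), then every `a_i = 0`. -/
theorem cyclic_system_only_trivial_solution {n : ℕ} [NeZero n] (hn : 2 ≤ n)
    (b : Fin n → ℤ) (hb : ∏ i, b i = (-1) ^ n * 2)
    (a : Fin n → ℚ) (ha : ∀ i : Fin n, a i ^ 2 * (b i : ℚ) = 2 * a i * a (i + 1)) :
    ∀ i, a i = 0 := by
  have hb0 : ∀ i, b i ≠ 0 := by
    intro i hi
    have h : ∏ i, b i = 0 := Finset.prod_eq_zero (Finset.mem_univ i) hi
    rw [hb] at h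
    simp at h
  have step : ∀ i, a i ≠ 0 → a i * (b i : ℚ) = 2 * a (i + 1) := by
    intro i hi
    apply mul_left_cancel₀ hi
    linear_combination ha i
  have next : ∀ i, a i ≠ 0 → a (i + 1) ≠ 0 := by
    intro i hi h
    have h1 := step i hi
    rw [h, mul_zero] at h1
    have h2 : (b i : ℚ) ≠ 0 := by exact_mod_cast hb0 i
    exact mul_ne_zero hi h2 h1
  intro i
  by_contra hi
  have hk : ∀ k : ℕ, a (i + Fin.ofNat n k) ≠ 0 := by
    intro k
    induction k with
    | zero =>
      have : i + Fin.ofNat n 0 = i := by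
        rw [show Fin.ofNat n 0 = (0 : Fin n) from rfl]
        exact add_zero i
      rwa [this]
    | succ k ih =>
      have : i + Fin.ofNat n (k + 1) = i + Fin.ofNat n k + 1 := by
        apply Fin.ext
        simp [Fin.val_add, Fin.ofNat, add_assoc]
      rw [this]
      exact next _ ih
  have hall : ∀ j, a j ≠ 0 := by
    intro j
    have : i + Fin.ofNat n (j - i).val = j := by
      haveI := Fin.instCommRing n
      rw [Fin.ofNat_val_eq_self]
      exact add_sub_cancel i j
    rw [← this]
    exact hk _
  have hprod : (∏ j, a j) * ∏ j, (b j : ℚ) = 2 ^ n * ∏ j, a j := by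
    rw [← Finset.prod_mul_distrib, Finset.prod_congr rfl (fun j _ => step j (hall j)),
      Finset.prod_mul_distrib]
    have : ∏ j, a (j + 1) = ∏ j, a j := Equiv.prod_comp (Equiv.addRight (1 : Fin n)) a
    rw [this]
    simp
  have hne : (∏ j, a j) ≠ 0 := Finset.prod_ne_zero_iff.mpr fun j _ => hall j
  have h2 : ∏ j, (b j : ℚ) = 2 ^ n := by
    apply mul_left_cancel₀ hne
    rw [hprod, mul_comm]
  have h3 : (-1 : ℤ) ^ n * 2 = 2 ^ n := by
    rw [← hb]
    exact_mod_cast h2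
  have h4 : (2 : ℤ) ^ 2 ≤ 2 ^ n := pow_le_pow_right₀ (by norm_num) hn
  rcases neg_one_pow_eq_or ℤ n with h | h <;> rw [h] at h3 <;> omega
end
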